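/- arXiv:1703.10986 — 4 statements merged into one kernel-verified Lean document; each statement's English description precedes it below -/
import Mathlib

section
/- If q ∈ 𝕊 is a non-real coquaternion with dv(q) > 0, then q is similar to the complex number re(q) + √(dv(q)) i, i.e. there exists an invertible h ∈ 𝕊 such that h⁻¹ q h = re(q) + √(dv(q)) i. -/
open Quaternion Polynomial

noncomputable section

/-- The real algebra of coquaternions (split quaternions):
basis `1, i, j, k` with `i² = -1`, `j² = k² = 1`, `ij = -ji = k`. -/
abbrev CoQ : Type := ℍ[ℝ, -1, 1]

/-- The determinant of a coquaternion: `det q = q₀² + q₁² - q₂² - q₃²` (equals `q * star q`). -/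
def coDet (q : CoQ) : ℝ := q.re ^ 2 + q.imI ^ 2 - q.imJ ^ 2 - q.imK ^ 2

/-- The determinant of the vector part of a coquaternion: `dv q = q₁² - q₂² - q₃²`. -/
def coDv (q : CoQ) : ℝ := q.imI ^ 2 - q.imJ ^ 2 - q.imK ^ 2

/-!
Purely imaginary coquaternions `u`, `v` with `u² = v²` satisfy `(u + v) u = v (u + v)`, so they are
similar as soon as `u + v` is invertible. For `u = im q` and `v = √(dv q) i` the determinant of
`u + v` is `2 √(dv q) (√(dv q) + q₁)`, which is nonzero if `q₁ > 0`. Conjugation by `j` changes the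
sign of `q₁`, and `q₁ ≠ 0` because `dv q > 0`.
-/

theorem isConj_iff_exists_units_inv_mul_mul_eq {M : Type*} [Monoid M] {a b : M} :
    IsConj a b ↔ ∃ u : Mˣ, ↑u⁻¹ * b * ↑u = a := by
  simp only [IsConj, SemiconjBy, mul_assoc, Units.inv_mul_eq_iff_eq_mul]
  exact exists_congr fun _ => eq_comm

theorem semiconjBy_add_of_mul_self_eq {R : Type*} [NonUnitalNonAssocSemiring R] {x y : R}
    (h : x * x = y * y) : SemiconjBy (x + y) x y := by
  rw [SemiconjBy, add_mul, mul_add, h, add_comm]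

section QuaternionAlgebra

variable {R : Type*} [CommRing R] {c₁ c₂ c₃ : R}

theorem isUnit_of_isUnit_re_mul_star {a : ℍ[R,c₁,c₂,c₃]} (h : IsUnit (a * star a).re) :
    IsUnit a := by
  have h_mul_star : IsUnit (a * star a) := by
    rw [a.mul_star_eq_coe]
    exact h.map (algebraMap R ℍ[R,c₁,c₂,c₃])
  exact ((star_comm_self (x := a)).symm.isUnit_mul_iff.mp h_mul_star).1

theorem isConj_of_im_mul_self_eq {p q : ℍ[R,c₁,c₂,c₃]} (hre : p.re = q.re)
    (him : p.im * p.im = q.im * q.im) (hunit : IsUnit (p.im + q.im)) : IsConj p q := by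
  refine ⟨hunit.unit, ?_⟩
  have hsemi : SemiconjBy (p.im + q.im) (q.re + p.im) (q.re + q.im) :=
    (QuaternionAlgebra.coe_commute _ _).symm.semiconjBy.add_right
      (semiconjBy_add_of_mul_self_eq him)
  rwa [← hre, p.re_add_im, hre, q.re_add_im] at hsemi

end QuaternionAlgebra

namespace CoQ

theorem re_mul_star (q : CoQ) : (q * star q).re = coDet q := by
  simp only [coDet, QuaternionAlgebra.re_mul, QuaternionAlgebra.re_star,
    QuaternionAlgebra.imI_star, QuaternionAlgebra.imJ_star, QuaternionAlgebra.imK_star]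
  ring

theorem isUnit_of_coDet_ne_zero {q : CoQ} (h : coDet q ≠ 0) : IsUnit q :=
  isUnit_of_isUnit_re_mul_star (by rwa [re_mul_star, isUnit_iff_ne_zero])

theorem im_mul_im (q : CoQ) : q.im * q.im = ((-coDv q : ℝ) : CoQ) := by
  ext <;> simp <;> grind [coDv]

theorem isConj_of_coDet_im_add_im_ne_zero {p q : CoQ} (hre : p.re = q.re)
    (hdv : coDv p = coDv q) (hdet : coDet (p.im + q.im) ≠ 0) : IsConj p q :=
  isConj_of_im_mul_self_eq hre (by rw [im_mul_im, im_mul_im, hdv])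
    (isUnit_of_coDet_ne_zero hdet)

/-- The basis element `j` as a unit, its own inverse. Conjugation by it negates the coefficients of
`i` and `k`. -/
def unitJ : CoQˣ where
  val := ⟨0, 0, 1, 0⟩
  inv := ⟨0, 0, 1, 0⟩
  val_inv := by ext <;> simp
  inv_val := by ext <;> simp

theorem isConj_neg_imI_neg_imK (q : CoQ) : IsConj (⟨q.re, -q.imI, q.imJ, -q.imK⟩ : CoQ) q :=
  ⟨unitJ, by ext <;> simp [unitJ]⟩

theorem imI_ne_zero_of_coDv_pos {q : CoQ} (hdv : 0 < coDv q) : q.imI ≠ 0 := by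
  intro h
  rw [coDv, h] at hdv
  nlinarith [sq_nonneg q.imJ, sq_nonneg q.imK]

theorem coDet_im_add_im_of_sq_eq_coDv {q : CoQ} {s : ℝ} (a : ℝ) (hs : s ^ 2 = coDv q) :
    coDet ((⟨a, s, 0, 0⟩ : CoQ).im + q.im) = 2 * (s * (s + q.imI)) := by
  have hdet : coDet ((⟨a, s, 0, 0⟩ : CoQ).im + q.im) =
      (s + q.imI) ^ 2 - q.imJ ^ 2 - q.imK ^ 2 := by simp [coDet]
  rw [hdet]
  rw [coDv] at hs
  linear_combination -hs

theorem isConj_mk_re_sqrt_coDv_of_imI_pos {q : CoQ} (hdv : 0 < coDv q) (hI : 0 < q.imI) :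
    IsConj (⟨q.re, √(coDv q), 0, 0⟩ : CoQ) q := by
  have hs_sq : √(coDv q) ^ 2 = coDv q := Real.sq_sqrt hdv.le
  refine isConj_of_coDet_im_add_im_ne_zero rfl (by simpa [coDv] using hs_sq) ?_
  rw [coDet_im_add_im_of_sq_eq_coDv q.re hs_sq]
  positivity

theorem isConj_mk_re_sqrt_coDv {q : CoQ} (hdv : 0 < coDv q) :
    IsConj (⟨q.re, √(coDv q), 0, 0⟩ : CoQ) q := by
  rcases (imI_ne_zero_of_coDv_pos hdv).lt_or_gt with hneg | hpos
  · let q' : CoQ := ⟨q.re, -q.imI, q.imJ, -q.imK⟩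
    have hdv' : coDv q' = coDv q := by simp [q', coDv]
    have hconj : IsConj (⟨q'.re, √(coDv q'), 0, 0⟩ : CoQ) q' :=
      isConj_mk_re_sqrt_coDv_of_imI_pos (hdv'.symm ▸ hdv) (neg_pos.mpr hneg)
    rw [hdv'] at hconj
    exact hconj.trans (isConj_neg_imI_neg_imK q)
  · exact isConj_mk_re_sqrt_coDv_of_imI_pos hdv hpos

end CoQ

/-- A non-real coquaternion with `dv q > 0` is similar to the complex number
`re q + √(dv q) i`. -/
theorem stmt_2 (q : CoQ) (hq : ¬(q.imI = 0 ∧ q.imJ = 0 ∧ q.imK = 0))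
    (hdv : 0 < coDv q) :
    ∃ u : CoQˣ, (↑u⁻¹ : CoQ) * q * ↑u = (⟨q.re, Real.sqrt (coDv q), 0, 0⟩ : CoQ) :=
  isConj_iff_exists_units_inv_mul_mul_eq.mp (CoQ.isConj_mk_re_sqrt_coDv hdv)
end
end

section
/- If q ∈ 𝕊 is a non-real coquaternion with dv(q) < 0, then q is similar to the perplex number re(q) + √(−dv(q)) j, i.e. there exists an invertible h ∈ 𝕊 such that h⁻¹ q h = re(q) + √(−dv(q)) j. -/
open Quaternion Polynomial

noncomputable section

/-!
If `x` and `y` are purely imaginary with the same scalar square, then `h = x * w + w * y`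
satisfies `x * h = h * y` for every `w`. Such an `h` conjugates `x` to `y` as soon as its norm is
nonzero. The norms of the `h` coming from `w = 1, i, j, k`, divided by the norm of `w`, add up to a
nonzero multiple of the common norm of `x` and `y`, so one of these four choices of `w` works.
-/

section ReducedNorm

variable {R : Type*} [CommRing R] {c₁ c₂ c₃ : R}

/-- The reduced norm of a quaternion algebra: the scalar `a * star a`. On `CoQ` it is `coDet`. -/
def reducedNorm (a : ℍ[R,c₁,c₂,c₃]) : R := (a * star a).re

theorem coe_reducedNorm (a : ℍ[R,c₁,c₂,c₃]) :
    (↑(reducedNorm a) : ℍ[R,c₁,c₂,c₃]) = a * star a :=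
  (QuaternionAlgebra.mul_star_eq_coe a).symm

theorem isUnit_of_isUnit_reducedNorm {a : ℍ[R,c₁,c₂,c₃]} (ha : IsUnit (reducedNorm a)) :
    IsUnit a := by
  have hcomm : Commute a (star a) := by
    rw [QuaternionAlgebra.star_eq_two_re_sub]
    exact ((QuaternionAlgebra.coe_commute _ a).symm).sub_right (Commute.refl a)
  have hunit : IsUnit (a * star a) := by
    rw [← coe_reducedNorm]
    exact ha.map (algebraMap R ℍ[R,c₁,c₂,c₃])
  exact (hcomm.isUnit_mul_iff.mp hunit).1

theorem reducedNorm_eq (a : ℍ[R,c₁,c₃]) :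
    reducedNorm a = a.re ^ 2 - c₁ * a.imI ^ 2 - c₃ * a.imJ ^ 2 + c₁ * c₃ * a.imK ^ 2 := by
  simp only [reducedNorm, QuaternionAlgebra.re_mul, QuaternionAlgebra.re_star,
    QuaternionAlgebra.imI_star, QuaternionAlgebra.imJ_star, QuaternionAlgebra.imK_star]
  ring

theorem im_sq_eq_neg_reducedNorm (a : ℍ[R,c₁,c₃]) :
    a.im ^ 2 = -(↑(reducedNorm a.im) : ℍ[R,c₁,c₃]) := by
  simp [coe_reducedNorm, QuaternionAlgebra.star_im, sq]

/-- Up to the factor `c₁ * c₃`, the left side is the sum of `N (x * w + w * y) / N w` over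
`w = 1, i, j, k`. Each summand is `N x + N y + tr (x * (w * star y * w⁻¹))`, and the conjugates
`w * star y * w⁻¹` add up to the scalar `4 * y.re`. -/
theorem weighted_sum_reducedNorm_mul_add_mul (x y : ℍ[R,c₁,c₃]) :
    c₁ * c₃ * reducedNorm (x * 1 + 1 * y)
        - c₃ * reducedNorm (x * ⟨0, 1, 0, 0⟩ + ⟨0, 1, 0, 0⟩ * y)
        - c₁ * reducedNorm (x * ⟨0, 0, 1, 0⟩ + ⟨0, 0, 1, 0⟩ * y)
        + reducedNorm (x * ⟨0, 0, 0, 1⟩ + ⟨0, 0, 0, 1⟩ * y) =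
      4 * c₁ * c₃ * (reducedNorm x + reducedNorm y + 2 * x.re * y.re) := by
  simp only [reducedNorm_eq, mul_one, one_mul, QuaternionAlgebra.re_add,
    QuaternionAlgebra.imI_add, QuaternionAlgebra.imJ_add, QuaternionAlgebra.imK_add,
    QuaternionAlgebra.re_mul, QuaternionAlgebra.imI_mul, QuaternionAlgebra.imJ_mul,
    QuaternionAlgebra.imK_mul]
  ring

theorem exists_reducedNorm_mul_add_mul_ne_zero {x y : ℍ[R,c₁,c₃]}
    (h : 4 * c₁ * c₃ * (reducedNorm x + reducedNorm y + 2 * x.re * y.re) ≠ 0) :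
    ∃ w, reducedNorm (x * w + w * y) ≠ 0 := by
  by_contra! hzero
  apply h
  rw [← weighted_sum_reducedNorm_mul_add_mul]
  simp only [hzero, mul_zero, sub_zero, add_zero]

end ReducedNorm

theorem semiconjBy_mul_add_mul {R : Type*} [Semiring R] {w x y : R}
    (h : SemiconjBy w (y ^ 2) (x ^ 2)) : SemiconjBy (x * w + w * y) y x := by
  calc (x * w + w * y) * y = x * w * y + w * y ^ 2 := by rw [add_mul, mul_assoc w, sq]
    _ = x * w * y + x ^ 2 * w := by rw [h.eq]
    _ = x * (x * w + w * y) := by rw [mul_add, sq, mul_assoc x x, mul_assoc x w, add_comm]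

theorem semiconjBy_of_semiconjBy_im {R : Type*} [CommRing R] {c₁ c₂ c₃ : R}
    {h p q : ℍ[R,c₁,c₂,c₃]} (hre : p.re = q.re) (him : SemiconjBy h p.im q.im) :
    SemiconjBy h p q := by
  rw [← p.re_add_im, ← q.re_add_im, hre]
  exact (QuaternionAlgebra.coe_commute q.re h).symm.semiconjBy.add_right him

theorem stmt_3_general {F : Type*} [Field F] [NeZero (2 : F)] {c₁ c₃ : F}
    (hc₁ : c₁ ≠ 0) (hc₃ : c₃ ≠ 0) {p q : ℍ[F,c₁,c₃]} (hre : p.re = q.re)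
    (him : reducedNorm p.im = reducedNorm q.im) (hq : reducedNorm q.im ≠ 0) :
    ∃ u : ℍ[F,c₁,c₃]ˣ, (↑u⁻¹ : ℍ[F,c₁,c₃]) * q * ↑u = p := by
  have hsq : p.im ^ 2 = q.im ^ 2 := by
    rw [im_sq_eq_neg_reducedNorm, im_sq_eq_neg_reducedNorm, him]
  have hcentral (w : ℍ[F,c₁,c₃]) : SemiconjBy w (p.im ^ 2) (q.im ^ 2) := by
    rw [hsq, im_sq_eq_neg_reducedNorm]
    exact (QuaternionAlgebra.coe_commute _ w).symm.neg_right
  have hsum : 4 * c₁ * c₃ *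
      (reducedNorm q.im + reducedNorm p.im + 2 * q.im.re * p.im.re) ≠ 0 := by
    have hne : 2 ^ 3 * c₁ * c₃ * reducedNorm q.im ≠ 0 :=
      mul_ne_zero (mul_ne_zero (mul_ne_zero (pow_ne_zero 3 two_ne_zero) hc₁) hc₃) hq
    convert hne using 1
    rw [him, QuaternionAlgebra.re_im]
    ring
  obtain ⟨w, hw⟩ := exists_reducedNorm_mul_add_mul_ne_zero hsum
  obtain ⟨u, hu⟩ := isUnit_of_isUnit_reducedNorm hw.isUnit
  have hconj : SemiconjBy (u : ℍ[F,c₁,c₃]) p q :=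
    semiconjBy_of_semiconjBy_im hre (hu ▸ semiconjBy_mul_add_mul (hcentral w))
  exact ⟨u, by rw [mul_assoc, Units.inv_mul_eq_iff_eq_mul, hconj.eq]⟩

theorem reducedNorm_im_eq_coDv (q : CoQ) : reducedNorm q.im = coDv q := by
  simp only [reducedNorm_eq, coDv, QuaternionAlgebra.re_im, QuaternionAlgebra.imI_im,
    QuaternionAlgebra.imJ_im, QuaternionAlgebra.imK_im]
  ring

theorem coDv_mk_sqrt_neg {d : ℝ} (hd : d ≤ 0) (r : ℝ) :
    coDv ⟨r, 0, Real.sqrt (-d), 0⟩ = d := by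
  simp [coDv, Real.sq_sqrt (neg_nonneg.mpr hd)]

/-- A non-real coquaternion with `dv q < 0` is similar to the perplex number
`re q + √(-dv q) j`. -/
theorem stmt_3 (q : CoQ) (hq : ¬(q.imI = 0 ∧ q.imJ = 0 ∧ q.imK = 0))
    (hdv : coDv q < 0) :
    ∃ u : CoQˣ, (↑u⁻¹ : CoQ) * q * ↑u = (⟨q.re, 0, Real.sqrt (-coDv q), 0⟩ : CoQ) := by
  refine stmt_3_general (by norm_num) one_ne_zero rfl ?_ ?_
  · rw [reducedNorm_im_eq_coDv, reducedNorm_im_eq_coDv, coDv_mk_sqrt_neg hdv.le]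
  · exact reducedNorm_im_eq_coDv q ▸ hdv.ne
end
end

section
/- Let P be a monic unilateral polynomial of degree n over the coquaternions 𝕊. Then the zeros of P belong to at most n(2n−1) quasi-similarity classes; precisely, the set {(re(z), det(z)) ∈ ℝ² : z ∈ 𝕊, P(z) = 0} is finite and has at most n(2n−1) elements. -/
open Quaternion Polynomial

noncomputable section

/-!
Represent quaternions by `2 × 2` matrices, so that real part and norm are read off the
characteristic polynomial. If a matrix polynomial `P` vanishes at `A`, then `P = Q * (X - A)`;
viewing both sides as matrices of polynomials and taking determinants, the characteristic polynomial
of `A` divides `det P`, whose degree is at most `2n`. Over an algebraic closure a monic quadratic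
divisor is determined by two of the at most `2n` roots of `det P`, which leaves
`(2n).choose 2 = n(2n-1)` possibilities.
-/

section RightFactor

variable {R : Type*} [Ring R]

theorem exists_eq_mul_X_sub_C_add_C_eval (P : R[X]) (z : R) :
    ∃ Q : R[X], P = Q * (X - C z) + C (P.eval z) := by
  induction P using Polynomial.induction_on' with
  | add p q hp hq =>
    obtain ⟨p', hp⟩ := hp
    obtain ⟨q', hq⟩ := hq
    refine ⟨p' + q', ?_⟩
    calc p + q = p' * (X - C z) + C (p.eval z) + (q' * (X - C z) + C (q.eval z)) := by
          rw [← hp, ← hq]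
      _ = (p' + q') * (X - C z) + C ((p + q).eval z) := by
          rw [add_mul, eval_add, C_add, add_add_add_comm]
  | monomial k c =>
    have hcomm : Commute (X : R[X]) (C z) := X_mul_C z
    refine ⟨C c * ∑ i ∈ Finset.range k, X ^ i * C z ^ (k - 1 - i), ?_⟩
    rw [mul_assoc, hcomm.geom_sum₂_mul, eval_monomial, ← C_mul_X_pow_eq_monomial, mul_sub, C_mul,
      C_pow, sub_add_cancel]

theorem exists_eq_mul_X_sub_C_of_eval_eq_zero {P : R[X]} {z : R} (hz : P.eval z = 0) :
    ∃ Q : R[X], P = Q * (X - C z) := by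
  simpa [hz] using exists_eq_mul_X_sub_C_add_C_eval P z

end RightFactor

section MonicDivisors

theorem injOn_aroots_monic (R L : Type*) [CommRing R] [Field L] [IsAlgClosed L] [Algebra R L]
    [FaithfulSMul R L] : Set.InjOn (fun p : R[X] ↦ p.aroots L) {p | p.Monic} := by
  intro p hp q hq hpq
  apply map_injective _ (FaithfulSMul.algebraMap_injective R L)
  rw [(IsAlgClosed.splits _).eq_prod_roots_of_monic (hp.map _),
    (IsAlgClosed.splits _).eq_prod_roots_of_monic (hq.map _)]
  exact congrArg (fun s ↦ (s.map (X - C ·)).prod) hpq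

theorem encard_monic_dvd_natDegree_eq_le {K : Type*} [Field K] {F : K[X]} (hF : F ≠ 0)
    (m : ℕ) :
    {p : K[X] | p.Monic ∧ p.natDegree = m ∧ p ∣ F}.encard ≤ F.natDegree.choose m := by
  classical
  let L := AlgebraicClosure K
  have hFL : F.map (algebraMap K L) ≠ 0 := map_ne_zero hF
  let T : Finset (Multiset L) := ((F.aroots L).powersetCard m).toFinset
  have hmaps : Set.MapsTo (fun p : K[X] ↦ p.aroots L)
      {p | p.Monic ∧ p.natDegree = m ∧ p ∣ F} T := by
    rintro p ⟨-, hdeg, hdvd⟩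
    rw [Finset.mem_coe, Multiset.mem_toFinset, Multiset.mem_powersetCard]
    exact ⟨roots.le_of_dvd hFL (Polynomial.map_dvd _ hdvd),
      IsAlgClosed.card_aroots_eq_natDegree.trans hdeg⟩
  calc {p : K[X] | p.Monic ∧ p.natDegree = m ∧ p ∣ F}.encard
      ≤ (T : Set (Multiset L)).encard :=
        Set.encard_le_encard_of_injOn hmaps ((injOn_aroots_monic K L).mono fun _ hp ↦ hp.1)
    _ = T.card := Set.encard_coe_eq_coe_finsetCard T
    _ ≤ F.natDegree.choose m := by
        rw [← IsAlgClosed.card_aroots_eq_natDegree (B := L), ← Multiset.card_powersetCard]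
        exact_mod_cast Multiset.toFinset_card_le _

end MonicDivisors

section MatrixPolynomial

variable {R ι : Type*} [CommRing R] [Fintype ι] [DecidableEq ι]

theorem natDegree_det_le_card_mul {M : Matrix ι ι R[X]} {d : ℕ}
    (hM : ∀ i j, (M i j).natDegree ≤ d) : M.det.natDegree ≤ Fintype.card ι * d := by
  rw [Matrix.det_apply]
  refine natDegree_sum_le_of_forall_le _ _ fun σ _ ↦ (natDegree_smul_le _ _).trans ?_
  refine (natDegree_prod_le _ _).trans ((Finset.sum_le_card_nsmul _ _ d fun i _ ↦ hM _ _).trans ?_)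
  rw [Finset.card_univ, smul_eq_mul]

theorem coeff_det_card_mul {M : Matrix ι ι R[X]} {d : ℕ}
    (hM : ∀ i j, (M i j).natDegree ≤ d) :
    M.det.coeff (Fintype.card ι * d) = (M.map (coeff · d)).det := by
  simp only [Matrix.det_apply, finsetSum_coeff, coeff_smul, Matrix.map_apply]
  refine Finset.sum_congr rfl fun σ _ ↦ congrArg _ ?_
  exact coeff_prod_of_natDegree_le _ _ d fun i _ ↦ hM _ _

theorem natDegree_matPolyEquiv_symm_apply_le (P : (Matrix ι ι R)[X]) (i j : ι) :
    (matPolyEquiv.symm P i j).natDegree ≤ P.natDegree := by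
  rw [natDegree_le_iff_coeff_eq_zero]
  intro k hk
  rw [matPolyEquiv_symm_apply_coeff, coeff_eq_zero_of_natDegree_lt hk, Matrix.zero_apply]

theorem det_matPolyEquiv_symm_ne_zero [Nontrivial R] {P : (Matrix ι ι R)[X]}
    (hP : IsUnit P.leadingCoeff) : (matPolyEquiv.symm P).det ≠ 0 := by
  have hlead : (matPolyEquiv.symm P).map (coeff · P.natDegree) = P.leadingCoeff := by
    ext i j
    exact matPolyEquiv_symm_apply_coeff P i j _
  intro hdet
  have hcoeff := coeff_det_card_mul (natDegree_matPolyEquiv_symm_apply_le P)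
  rw [hdet, coeff_zero, hlead] at hcoeff
  exact ((Matrix.isUnit_iff_isUnit_det _).1 hP).ne_zero hcoeff.symm

theorem charpoly_dvd_det_matPolyEquiv_symm {P : (Matrix ι ι R)[X]} {A : Matrix ι ι R}
    (hA : P.eval A = 0) : A.charpoly ∣ (matPolyEquiv.symm P).det := by
  obtain ⟨Q, rfl⟩ := exists_eq_mul_X_sub_C_of_eval_eq_zero hA
  rw [← Matrix.matPolyEquiv_charmatrix, map_mul, AlgEquiv.symm_apply_apply, Matrix.det_mul]
  exact dvd_mul_left _ _

theorem encard_charpoly_zeros_le {K : Type*} [Field K] {P : (Matrix ι ι K)[X]}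
    (hP : (matPolyEquiv.symm P).det ≠ 0) :
    (Matrix.charpoly '' {A | P.eval A = 0}).encard ≤
      (Fintype.card ι * P.natDegree).choose (Fintype.card ι) := by
  have hsub : Matrix.charpoly '' {A | P.eval A = 0} ⊆
      {p | p.Monic ∧ p.natDegree = Fintype.card ι ∧ p ∣ (matPolyEquiv.symm P).det} := by
    rintro _ ⟨A, hA, rfl⟩
    exact ⟨A.charpoly_monic, A.charpoly_natDegree_eq_dim, charpoly_dvd_det_matPolyEquiv_symm hA⟩
  refine (Set.encard_le_encard hsub).trans ((encard_monic_dvd_natDegree_eq_le hP _).trans ?_)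
  exact_mod_cast Nat.choose_le_choose _
    (natDegree_det_le_card_mul (natDegree_matPolyEquiv_symm_apply_le P))

end MatrixPolynomial

section QuaternionAlgebra

variable {R S : Type*} [CommRing R] [CommRing S] [Algebra R S] {a : R} {s : S}

/-- The common characteristic polynomial of the elements with real part `p.1` and norm `p.2` of a
quaternion algebra over `R`; it encodes a quasi-similarity class as a polynomial. -/
def reducedCharpoly (p : R × R) : R[X] := X ^ 2 - C (2 * p.1) * X + C p.2

theorem reducedCharpoly_injective [IsDomain R] [NeZero (2 : R)] :
    Function.Injective (reducedCharpoly : R × R → R[X]) := by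
  intro p q h
  have hnorm : p.2 = q.2 := by
    simpa [reducedCharpoly] using congrArg (coeff · 0) h
  have htrace : 2 * p.1 = 2 * q.1 := by
    simpa [reducedCharpoly, coeff_X, coeff_C] using congrArg (coeff · 1) h
  exact Prod.ext (mul_left_cancel₀ two_ne_zero htrace) hnorm

/-- A quaternion basis of the `2 × 2` matrices over an algebra `S` over `R` in which `a` has a
square root `s`. Its lift represents `ℍ[R,a,b]` by matrices whose trace and determinant are the
reduced trace and norm. -/
def matrixQuaternionBasis (hs : algebraMap R S a = s * s) (b : R) :
    QuaternionAlgebra.Basis (Matrix (Fin 2) (Fin 2) S) a 0 b where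
  i := !![s, 0; 0, -s]
  j := !![0, algebraMap R S b; 1, 0]
  k := !![0, b • s; -s, 0]
  i_mul_i := by
    rw [Algebra.algebraMap_eq_smul_one] at hs
    simp [Matrix.one_fin_two, hs]
  j_mul_j := by simp [Matrix.one_fin_two, Algebra.algebraMap_eq_smul_one]
  i_mul_j := by simp [Algebra.algebraMap_eq_smul_one]
  j_mul_i := by simp [Algebra.algebraMap_eq_smul_one]

theorem matrixQuaternionBasis_liftHom_apply (hs : algebraMap R S a = s * s) {b : R}
    (z : ℍ[R,a,b]) :
    (matrixQuaternionBasis hs b).liftHom z =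
      !![algebraMap R S z.re + algebraMap R S z.imI * s,
          algebraMap R S b * (algebraMap R S z.imJ + algebraMap R S z.imK * s);
        algebraMap R S z.imJ - algebraMap R S z.imK * s,
          algebraMap R S z.re - algebraMap R S z.imI * s] := by
  ext i j
  rw [QuaternionAlgebra.Basis.liftHom_apply, QuaternionAlgebra.Basis.lift]
  simp only [Matrix.add_apply, Matrix.smul_apply, Matrix.algebraMap_matrix_apply]
  simp only [Algebra.smul_def]
  fin_cases i <;> fin_cases j <;> simp [matrixQuaternionBasis, Algebra.smul_def] <;> ring

theorem charpoly_matrixQuaternionBasis_liftHom [Nontrivial S]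
    (hs : algebraMap R S a = s * s) {b : R} (z : ℍ[R,a,b]) :
    ((matrixQuaternionBasis hs b).liftHom z).charpoly =
      (reducedCharpoly (z.re, (z * star z).re)).map (algebraMap R S) := by
  have htrace : ((matrixQuaternionBasis hs b).liftHom z).trace = algebraMap R S (2 * z.re) := by
    rw [matrixQuaternionBasis_liftHom_apply, Matrix.trace_fin_two_of, map_mul, map_ofNat]
    ring
  have hdet : ((matrixQuaternionBasis hs b).liftHom z).det = algebraMap R S (z * star z).re := by
    rw [matrixQuaternionBasis_liftHom_apply, Matrix.det_fin_two_of]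
    simp only [QuaternionAlgebra.re_mul, QuaternionAlgebra.re_star, QuaternionAlgebra.imI_star,
      QuaternionAlgebra.imJ_star, QuaternionAlgebra.imK_star, map_add, map_sub, map_mul, map_neg,
      map_zero, hs]
    ring
  rw [Matrix.charpoly_fin_two, htrace, hdet, reducedCharpoly]
  simp only [Polynomial.map_add, Polynomial.map_sub, Polynomial.map_mul, Polynomial.map_pow,
    map_X, map_C]

end QuaternionAlgebra

theorem stmt_12_general {K : Type*} [Field K] [NeZero (2 : K)] {a b : K} (P : ℍ[K,a,b][X])
    (hP : IsUnit P.leadingCoeff) :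
    {p : K × K | ∃ z : ℍ[K,a,b], P.eval z = 0 ∧ p = (z.re, (z * star z).re)}.encard ≤
      (P.natDegree * (2 * P.natDegree - 1) : ℕ) := by
  obtain ⟨s, hs⟩ := IsAlgClosed.exists_eq_mul_self (algebraMap K (AlgebraicClosure K) a)
  let φ := (matrixQuaternionBasis hs b).liftHom.toRingHom
  have hlead : IsUnit (P.map φ).leadingCoeff := by
    have hφ : IsUnit (φ P.leadingCoeff) := hP.map φ
    rwa [leadingCoeff_map_of_leadingCoeff_ne_zero φ hφ.ne_zero]
  have hmaps : Set.MapsTo (fun p ↦ (reducedCharpoly p).map (algebraMap K (AlgebraicClosure K)))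
      {p | ∃ z : ℍ[K,a,b], P.eval z = 0 ∧ p = (z.re, (z * star z).re)}
      (Matrix.charpoly '' {A | (P.map φ).eval A = 0}) := by
    rintro _ ⟨z, hz, rfl⟩
    refine ⟨φ z, ?_, charpoly_matrixQuaternionBasis_liftHom hs z⟩
    rw [Set.mem_ofPred_eq, eval_map, eval₂_hom, hz, map_zero]
  have hinj : Function.Injective fun p : K × K ↦
      (reducedCharpoly p).map (algebraMap K (AlgebraicClosure K)) :=
    (map_injective _ (algebraMap K _).injective).comp reducedCharpoly_injective
  calc _ ≤ (Matrix.charpoly '' {A | (P.map φ).eval A = 0}).encard :=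
        Set.encard_le_encard_of_injOn hmaps hinj.injOn
    _ ≤ ((2 * (P.map φ).natDegree).choose 2 : ℕ) := by
        simpa using encard_charpoly_zeros_le (det_matPolyEquiv_symm_ne_zero hlead)
    _ ≤ ((2 * P.natDegree).choose 2 : ℕ) := by
        exact_mod_cast Nat.choose_le_choose 2 (Nat.mul_le_mul_left 2 natDegree_map_le)
    _ = (P.natDegree * (2 * P.natDegree - 1) : ℕ) := by
        rw [Nat.choose_two_right, mul_assoc, Nat.mul_div_cancel_left _ two_pos]

theorem coDet_eq_re_mul_star (q : CoQ) : coDet q = (q * star q).re := by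
  simp only [coDet, QuaternionAlgebra.re_mul, QuaternionAlgebra.re_star, QuaternionAlgebra.imI_star,
    QuaternionAlgebra.imJ_star, QuaternionAlgebra.imK_star]
  ring

/-- The zeros of a monic coquaternionic polynomial of degree `n` belong to at most
`n(2n-1)` quasi-similarity classes (classes are identified with pairs
`(re z, det z)`). -/
theorem stmt_12 (P : Polynomial CoQ) (n : ℕ) (hmonic : P.Monic)
    (hdeg : P.natDegree = n) :
    {p : ℝ × ℝ | ∃ z : CoQ, P.eval z = 0 ∧ p = (z.re, coDet z)}.Finite ∧
    {p : ℝ × ℝ | ∃ z : CoQ, P.eval z = 0 ∧ p = (z.re, coDet z)}.ncard ≤ n * (2 * n - 1) := by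
  subst hdeg
  simp only [coDet_eq_re_mul_star]
  exact Set.encard_le_coe_iff_finite_ncard_le.1 (stmt_12_general P (hmonic ▸ isUnit_one))
end
end

section
/- Let B = b₀ + b₁ i + b₂ j + b₃ k ∈ 𝕊 with B ≠ 0 and det(B) = 0 (so b₀² + b₁² = b₂² + b₃² ≠ 0), and set k₁ = −(b₀b₂ + b₁b₃)/(b₀² + b₁²) and k₂ = (b₁b₂ − b₀b₃)/(b₀² + b₁²). Then for u ∈ 𝕊, B u = 0 if and only if there exist α, β ∈ ℝ such that u = α + β i + (k₁α + k₂β) j + (k₂α − k₁β) k. -/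
open Quaternion Polynomial

noncomputable section

/-!
Write `q = z + w * j` with `z, w` in the commutative subalgebra `R[i]`. Since `j * x = x̄ * j` and
`j ^ 2 = c₃`, for `u = x + y * j` we get
`q * u = (z * x + c₃ * (w * ȳ)) + (z * y + w * x̄) * j`.
When `z` is cancellable, the `j`-part vanishes exactly for `y = κ * x̄` with `κ = -w / z`. The other
part then vanishes automatically: times `z̄` it equals `(z * z̄ - c₃ * (w * w̄)) * x`, and
`z * z̄ = c₃ * (w * w̄)` is the condition `q * star q = 0`. The constants `k₁, k₂` are the
coordinates of `κ`.
-/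

open scoped nonZeroDivisors

section CommRing

variable {R : Type*} [CommRing R] {c₁ c₂ c₃ : R}

/-- The component `z` of a quaternion `q = z + w * j` with `z, w ∈ R[i]`. The subalgebra `R[i]` is
encoded as Mathlib's quadratic algebra, whose generator `ω` satisfies the same equation as `i`. -/
def quadFst (q : ℍ[R,c₁,c₂,c₃]) : QuadraticAlgebra R c₁ c₂ := ⟨q.re, q.imI⟩

/-- The component `w` of a quaternion `q = z + w * j` with `z, w ∈ R[i]`; its coordinates are those
of `q` along `j` and `k = i * j`. -/
def quadSnd (q : ℍ[R,c₁,c₂,c₃]) : QuadraticAlgebra R c₁ c₂ := ⟨q.imJ, q.imK⟩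

theorem eq_zero_iff_quadFst_quadSnd {q : ℍ[R,c₁,c₂,c₃]} :
    q = 0 ↔ quadFst q = 0 ∧ quadSnd q = 0 := by
  simp [QuaternionAlgebra.ext_iff, QuadraticAlgebra.ext_iff, quadFst, quadSnd, and_assoc]

theorem quadFst_mul (p q : ℍ[R,c₁,c₂,c₃]) :
    quadFst (p * q) =
      quadFst p * quadFst q + algebraMap R _ c₃ * (quadSnd p * star (quadSnd q)) := by
  ext <;> simp only [quadFst, quadSnd, QuaternionAlgebra.re_mul, QuaternionAlgebra.imI_mul,
    QuadraticAlgebra.star_mk, QuadraticAlgebra.mk_mul_mk, QuadraticAlgebra.algebraMap_eq,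
    QuadraticAlgebra.re_add, QuadraticAlgebra.im_add] <;> ring

theorem quadSnd_mul (p q : ℍ[R,c₁,c₂,c₃]) :
    quadSnd (p * q) = quadFst p * quadSnd q + quadSnd p * star (quadFst q) := by
  ext <;> simp only [quadFst, quadSnd, QuaternionAlgebra.imJ_mul, QuaternionAlgebra.imK_mul,
    QuadraticAlgebra.star_mk, QuadraticAlgebra.mk_mul_mk, QuadraticAlgebra.re_add,
    QuadraticAlgebra.im_add] <;> ring

theorem mul_star_self_eq_coe_norm_sub (q : ℍ[R,c₁,c₂,c₃]) :
    q * star q = ((quadFst q).norm - c₃ * (quadSnd q).norm : R) := by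
  rw [QuaternionAlgebra.mul_star_eq_coe, QuaternionAlgebra.coe_inj]
  simp only [quadFst, quadSnd, QuadraticAlgebra.norm_def, QuaternionAlgebra.re_mul,
    QuaternionAlgebra.re_star, QuaternionAlgebra.imI_star, QuaternionAlgebra.imJ_star,
    QuaternionAlgebra.imK_star]
  ring

theorem mul_star_self_eq_zero_iff_norm_eq {q : ℍ[R,c₁,c₂,c₃]} :
    q * star q = 0 ↔ (quadFst q).norm = c₃ * (quadSnd q).norm := by
  rw [mul_star_self_eq_coe_norm_sub, ← QuaternionAlgebra.coe_zero, QuaternionAlgebra.coe_inj,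
    sub_eq_zero]

theorem quadSnd_mul_eq_zero_iff {q : ℍ[R,c₁,c₂,c₃]} {κ : QuadraticAlgebra R c₁ c₂}
    (hz : quadFst q ∈ (QuadraticAlgebra R c₁ c₂)⁰) (hκ : quadFst q * κ = -quadSnd q)
    (u : ℍ[R,c₁,c₂,c₃]) :
    quadSnd (q * u) = 0 ↔ quadSnd u = κ * star (quadFst u) := by
  have factor : quadSnd (q * u) = quadFst q * (quadSnd u - κ * star (quadFst u)) := by
    rw [quadSnd_mul, mul_sub, ← mul_assoc, hκ, neg_mul, sub_neg_eq_add]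
  rw [factor, mul_left_mem_nonZeroDivisors_eq_zero_iff hz, sub_eq_zero]

theorem quadFst_mul_eq_zero {q u : ℍ[R,c₁,c₂,c₃]} {κ : QuadraticAlgebra R c₁ c₂}
    (hq : q * star q = 0) (hz : quadFst q ∈ (QuadraticAlgebra R c₁ c₂)⁰)
    (hκ : quadFst q * κ = -quadSnd q) (hu : quadSnd u = κ * star (quadFst u)) :
    quadFst (q * u) = 0 := by
  have norm_eq : quadFst q * star (quadFst q) =
      algebraMap R _ c₃ * (quadSnd q * star (quadSnd q)) := by
    rw [← QuadraticAlgebra.algebraMap_norm_eq_mul_star,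
      ← QuadraticAlgebra.algebraMap_norm_eq_mul_star,
      mul_star_self_eq_zero_iff_norm_eq.mp hq, map_mul]
  have star_hκ : star (quadFst q) * star κ = -star (quadSnd q) := by
    rw [← star_mul', hκ, star_neg]
  have star_hz : star (quadFst q) ∈ (QuadraticAlgebra R c₁ c₂)⁰ :=
    QuadraticAlgebra.star_mem_nonZeroDivisors hz
  rw [← mul_left_mem_nonZeroDivisors_eq_zero_iff star_hz, quadFst_mul, hu, star_mul',
    star_star]
  linear_combination quadFst u * norm_eq + algebraMap R _ c₃ * quadSnd q * quadFst u * star_hκ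

theorem mul_eq_zero_iff_quadSnd_eq {q : ℍ[R,c₁,c₂,c₃]} {κ : QuadraticAlgebra R c₁ c₂}
    (hq : q * star q = 0) (hz : quadFst q ∈ (QuadraticAlgebra R c₁ c₂)⁰)
    (hκ : quadFst q * κ = -quadSnd q) (u : ℍ[R,c₁,c₂,c₃]) :
    q * u = 0 ↔ quadSnd u = κ * star (quadFst u) := by
  rw [eq_zero_iff_quadFst_quadSnd, quadSnd_mul_eq_zero_iff hz hκ]
  exact and_iff_right_of_imp (quadFst_mul_eq_zero hq hz hκ)

theorem quadSnd_eq_mul_star_quadFst_iff (k₁ k₂ : R) (u : ℍ[R,c₁,c₂,c₃]) :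
    quadSnd u = ⟨k₁, k₂⟩ * star (quadFst u) ↔
      ∃ α β : R, u = ⟨α, β, k₁ * (α + c₂ * β) - c₁ * k₂ * β, k₂ * α - k₁ * β⟩ := by
  have mul_star_eq (α β : R) : (⟨k₁, k₂⟩ * star ⟨α, β⟩ : QuadraticAlgebra R c₁ c₂) =
      ⟨k₁ * (α + c₂ * β) - c₁ * k₂ * β, k₂ * α - k₁ * β⟩ := by
    rw [QuadraticAlgebra.star_mk, QuadraticAlgebra.mk_mul_mk]
    ext <;> ring
  simp only [quadFst, quadSnd, mul_star_eq, QuadraticAlgebra.mk.injEq, QuaternionAlgebra.ext_iff]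
  constructor
  · rintro ⟨hJ, hK⟩
    exact ⟨u.re, u.imI, rfl, rfl, hJ, hK⟩
  · rintro ⟨α, β, rfl, rfl, hJ, hK⟩
    exact ⟨hJ, hK⟩

end CommRing

section Field

variable {K : Type*} [Field K] {c₁ c₂ c₃ : K}

theorem quadFst_ne_zero [Fact (∀ r : K, r ^ 2 ≠ c₁ + c₂ * r)] {q : ℍ[K,c₁,c₂,c₃]}
    (hc₃ : c₃ ≠ 0) (hq : q ≠ 0) (hnorm : q * star q = 0) :
    quadFst q ≠ 0 := by
  intro hz
  have norm_snd : (quadSnd q).norm = 0 := by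
    simpa [hz, hc₃] using mul_star_self_eq_zero_iff_norm_eq.mp hnorm
  exact hq (eq_zero_iff_quadFst_quadSnd.mpr
    ⟨hz, QuadraticAlgebra.norm_eq_zero_iff_eq_zero.mp norm_snd⟩)

theorem neg_quadSnd_div_quadFst (q : ℍ[K,c₁,c₂,c₃]) :
    -(quadSnd q / quadFst q) =
      ⟨-((q.re * q.imJ + c₂ * q.imI * q.imJ - c₁ * q.imI * q.imK) /
          (q.re ^ 2 + c₂ * q.re * q.imI - c₁ * q.imI ^ 2)),
        (q.imI * q.imJ - q.re * q.imK) /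
          (q.re ^ 2 + c₂ * q.re * q.imI - c₁ * q.imI ^ 2)⟩ := by
  have norm_fst : (quadFst q).norm = q.re ^ 2 + c₂ * q.re * q.imI - c₁ * q.imI ^ 2 := by
    rw [QuadraticAlgebra.norm_def, quadFst]
    ring
  rw [← norm_fst]
  ext <;> simp only [QuadraticAlgebra.re_neg, QuadraticAlgebra.im_neg, QuadraticAlgebra.re_div,
    QuadraticAlgebra.im_div] <;> simp only [quadFst, quadSnd] <;> ring

end Field

theorem stmt_16_general {K : Type*} [Field K] {c₁ c₂ c₃ : K}
    (hirr : ∀ r : K, r ^ 2 ≠ c₁ + c₂ * r) (hc₃ : c₃ ≠ 0)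
    (B : ℍ[K,c₁,c₂,c₃]) (hB : B ≠ 0) (hnorm : B * star B = 0) (k₁ k₂ : K)
    (hk₁ : k₁ = -((B.re * B.imJ + c₂ * B.imI * B.imJ - c₁ * B.imI * B.imK) /
      (B.re ^ 2 + c₂ * B.re * B.imI - c₁ * B.imI ^ 2)))
    (hk₂ : k₂ = (B.imI * B.imJ - B.re * B.imK) /
      (B.re ^ 2 + c₂ * B.re * B.imI - c₁ * B.imI ^ 2))
    (u : ℍ[K,c₁,c₂,c₃]) :
    B * u = 0 ↔
      ∃ α β : K, u = ⟨α, β, k₁ * (α + c₂ * β) - c₁ * k₂ * β, k₂ * α - k₁ * β⟩ := by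
  have : Fact (∀ r : K, r ^ 2 ≠ c₁ + c₂ * r) := ⟨hirr⟩
  have hz : quadFst B ≠ 0 := quadFst_ne_zero hc₃ hB hnorm
  have hκ : quadFst B * ⟨k₁, k₂⟩ = -quadSnd B := by
    rw [hk₁, hk₂, ← neg_quadSnd_div_quadFst, mul_neg, mul_div_cancel₀ _ hz]
  rw [mul_eq_zero_iff_quadSnd_eq hnorm (mem_nonZeroDivisors_of_ne_zero hz) hκ,
    quadSnd_eq_mul_star_quadFst_iff]

theorem mul_star_self_eq_coe_coDet (q : CoQ) : q * star q = (coDet q : ℝ) := by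
  rw [mul_star_self_eq_coe_norm_sub, QuaternionAlgebra.coe_inj, QuadraticAlgebra.norm_def,
    QuadraticAlgebra.norm_def]
  simp only [coDet, quadFst, quadSnd]
  ring

/-- Description of the kernel of left multiplication by a nonzero singular
coquaternion `B`. -/
theorem stmt_16 (B : CoQ) (hB : B ≠ 0) (hdet : coDet B = 0)
    (k₁ k₂ : ℝ)
    (hk₁ : k₁ = -((B.re * B.imJ + B.imI * B.imK) / (B.re ^ 2 + B.imI ^ 2)))
    (hk₂ : k₂ = (B.imI * B.imJ - B.re * B.imK) / (B.re ^ 2 + B.imI ^ 2))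
    (u : CoQ) :
    B * u = 0 ↔ ∃ α β : ℝ, u = (⟨α, β, k₁ * α + k₂ * β, k₂ * α - k₁ * β⟩ : CoQ) := by
  simpa using stmt_16_general (fun r ↦ by linarith [sq_nonneg r]) one_ne_zero B hB
    (by rw [mul_star_self_eq_coe_coDet, hdet, QuaternionAlgebra.coe_zero]) k₁ k₂
    (by simpa using hk₁) (by simpa using hk₂) u
end
end
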